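/- Let a = {aⱼ} be a summable, non-increasing sequence of positive real numbers with associated Cantor set C_a, and let h be a dimension function. If P₀^h(C_a) = ∞ then P^h(C_a) = ∞, and if P₀^h(C_a) > 0 then P^h(C_a) > 0. -/

import Mathlib

open Set Filter Metric MeasureTheory
open scoped ENNReal NNReal Topology

noncomputable section

/-- The `h`-Hausdorff measure of `E ⊆ ℝ`:
`H^h(E) = lim_{δ→0⁺} inf {Σᵢ h(|Eᵢ|) : E ⊆ ⋃ᵢ Eᵢ, |Eᵢ| ≤ δ}`.
Since the inner infimum is antitone in `δ`, the limit as `δ → 0⁺` is the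
supremum over `0 < δ ≤ A` (the parameter `A` records the domain `(0,A]` of the
dimension function `h`; by monotonicity the value of the limit is unchanged). -/
def Hh (A : ℝ) (h : ℝ → ℝ≥0∞) (E : Set ℝ) : ℝ≥0∞ :=
  ⨆ (δ : ℝ) (_ : 0 < δ) (_ : δ ≤ A),
    ⨅ (t : ℕ → Set ℝ) (_ : E ⊆ ⋃ n, t n) (_ : ∀ n, Metric.diam (t n) ≤ δ),
      ∑' n, h (Metric.diam (t n))

/-- A `δ`-packing of `E`: a countable disjoint family of open balls centered at
points of `E` with diameters less than `δ`, recorded as a set of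
(center, radius) pairs. -/
def IsPacking (E : Set ℝ) (δ : ℝ) (P : Set (ℝ × ℝ)) : Prop :=
  P.Countable ∧ (∀ p ∈ P, p.1 ∈ E ∧ 0 < p.2 ∧ 2 * p.2 < δ) ∧
    P.PairwiseDisjoint fun p => Metric.ball p.1 p.2

/-- The `h`-packing pre-measure of `E ⊆ ℝ`:
`P₀^h(E) = lim_{δ→0⁺} sup {Σᵢ h(|Bᵢ|) : {Bᵢ} is a δ-packing of E}`.
The inner supremum is monotone in `δ`, so the limit as `δ → 0⁺` is the infimum
over `0 < δ ≤ A`. -/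
def P0h (A : ℝ) (h : ℝ → ℝ≥0∞) (E : Set ℝ) : ℝ≥0∞ :=
  ⨅ (δ : ℝ) (_ : 0 < δ) (_ : δ ≤ A),
    ⨆ (P : Set (ℝ × ℝ)) (_ : IsPacking E δ P), ∑' p : P, h (2 * (p : ℝ × ℝ).2)

/-- The `h`-packing measure: `P^h(E) = inf {Σᵢ P₀^h(Eᵢ) : E = ⋃ᵢ Eᵢ}`. -/
def Ph (A : ℝ) (h : ℝ → ℝ≥0∞) (E : Set ℝ) : ℝ≥0∞ :=
  ⨅ (t : ℕ → Set ℝ) (_ : E = ⋃ n, t n), ∑' n, P0h A h (t n)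

/-- `h` is a dimension function with domain `(0, A]`: continuous, increasing,
doubling, positive, with `h(x) → 0` as `x → 0⁺`.  We record partial functions
`(0,A] → (0,∞]` as functions `ℝ → ℝ≥0∞` extended by `0` on nonpositive
arguments (the continuous extension at `0`). -/
structure IsDimFun (A : ℝ) (h : ℝ → ℝ≥0∞) : Prop where
  posA : 0 < A
  zero_of_nonpos : ∀ x : ℝ, x ≤ 0 → h x = 0
  pos : ∀ x ∈ Set.Ioc (0 : ℝ) A, 0 < h x
  continuousOn : ContinuousOn h (Set.Ioc 0 A)
  strictMonoOn : StrictMonoOn h (Set.Ioc 0 A)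
  doubling : ∃ τ : ℝ≥0∞, 0 < τ ∧ τ ≠ ∞ ∧ ∀ x : ℝ, 0 < x → 2 * x ≤ A → τ * h (2 * x) ≤ h x
  tendsto_zero : Tendsto h (nhdsWithin 0 (Set.Ioi 0)) (nhds 0)

/-- `f ≼ h` on `(0, A]`: there is a (finite, positive) constant `c` with
`f(x) ≤ c·h(x)` for all `x ∈ (0,A]`. -/
def FLeq (A : ℝ) (f h : ℝ → ℝ≥0∞) : Prop :=
  ∃ c : ℝ≥0∞, 0 < c ∧ c ≠ ∞ ∧ ∀ x ∈ Set.Ioc (0 : ℝ) A, f x ≤ c * h x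

/-- `f ≡ h` on `(0, A]`: `f ≼ h` and `h ≼ f`. -/
def FEquiv (A : ℝ) (f h : ℝ → ℝ≥0∞) : Prop := FLeq A f h ∧ FLeq A h f

/-- Tail of a series: `rTail a n = Σ_{j ≥ n} a j` (0-based indexing, so the
paper's `r_n`, `n ≥ 1`, is `rTail a (n-1)`). -/
def rTail (a : ℕ → ℝ) (n : ℕ) : ℝ := ∑' k : ℕ, a (n + k)

/-- In the Cantor construction for the gap sequence `a`, the gaps are indexed
by the nodes `m ≥ 1` of the infinite binary tree in heap order (node `m` has
children `2m, 2m+1`), the gap at node `m` having length `a (m-1)`.  `nodeLen a m`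
is the sum of the lengths of all gaps in the subtree rooted at `m`, i.e. the
length of the step interval corresponding to node `m`. -/
def nodeLen (a : ℕ → ℝ) (m : ℕ) : ℝ :=
  ∑' k : ℕ, ∑ i ∈ Finset.range (2 ^ k), a (m * 2 ^ k + i - 1)

/-- Left endpoint of the `j`-th (0 ≤ j < 2^k, left to right) step-`k` interval
in the Cantor construction for the gap sequence `a` (realized in `[0, Σ a]`):
a left child keeps its parent's left endpoint; a right child's interval starts
after its left sibling's interval followed by the parent's gap. -/
def leftEnd (a : ℕ → ℝ) : ℕ → ℕ → ℝ
  | 0, _ => 0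
  | (k + 1), j =>
    if j % 2 = 0 then leftEnd a k (j / 2)
    else leftEnd a k (j / 2) + nodeLen a (2 ^ (k + 1) + j - 1) + a (2 ^ k + j / 2 - 1)

/-- The Cantor set `C_a` associated with a (positive, non-increasing, summable)
sequence `a`, realized inside the interval `[0, Σ a]`: the intersection over
`k` of the unions of the `2^k` step-`k` intervals. -/
def cantorSetOf (a : ℕ → ℝ) : Set ℝ :=
  ⋂ k : ℕ, ⋃ j ∈ Finset.range (2 ^ k),
    Set.Icc (leftEnd a k j) (leftEnd a k j + nodeLen a (2 ^ k + j))

/-- `h` (increasing and continuous on `(0, A]`) is associated to the sequence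
`a`: the sequence `{h(r_n/n)}` is equivalent to `{1/n}`, i.e. there are
constants `0 < c₁, c₂ < ∞` with `c₁ ≤ n · h(r_n/n) ≤ c₂` for all `n ≥ 1`
(0-based: `n ≥ 1` corresponds to `n+1` below). -/
def IsAssociated (A : ℝ) (h : ℝ → ℝ≥0∞) (a : ℕ → ℝ) : Prop :=
  ContinuousOn h (Set.Ioc 0 A) ∧ StrictMonoOn h (Set.Ioc 0 A) ∧
  ∃ c₁ c₂ : ℝ≥0∞, 0 < c₁ ∧ c₂ ≠ ∞ ∧ ∀ n : ℕ,
    c₁ ≤ ((n : ℝ≥0∞) + 1) * h (rTail a n / ((n : ℝ) + 1)) ∧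
    ((n : ℝ≥0∞) + 1) * h (rTail a n / ((n : ℝ) + 1)) ≤ c₂

/-- Weak tail-equivalence: there are positive integers `j, k` with
`r_n^{(a)} ≥ r_{jn}^{(b)}/j` and `r_n^{(b)} ≥ r_{kn}^{(a)}/k` for all `n ≥ 1`
(0-based shift: paper's `r_n` is `rTail · (n-1)`). -/
def WeakTailEquiv (a b : ℕ → ℝ) : Prop :=
  ∃ j k : ℕ, 0 < j ∧ 0 < k ∧
    (∀ n : ℕ, rTail b (j * (n + 1) - 1) / (j : ℝ) ≤ rTail a n) ∧
    (∀ n : ℕ, rTail a (k * (n + 1) - 1) / (k : ℝ) ≤ rTail b n)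

/-- Tail-equivalence: the sequences of tails are equivalent, i.e. the ratios
`r_n^{(a)}/r_n^{(b)}` are bounded above and below by positive constants. -/
def TailEquiv (a b : ℕ → ℝ) : Prop :=
  ∃ c₁ c₂ : ℝ, 0 < c₁ ∧ ∀ n : ℕ,
    c₁ ≤ rTail a n / rTail b n ∧ rTail a n / rTail b n ≤ c₂

/-- The Hausdorff dimension of `E`, computed from the `h_s`-Hausdorff measures,
`h_s(x) = x^s`:  `dim_H E = sup {s > 0 : H^{h_s}(E) = ∞}`. -/
def hausdDim (A : ℝ) (E : Set ℝ) : ℝ≥0∞ :=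
  ⨆ (s : ℝ) (_ : 0 < s) (_ : Hh A (fun x => ENNReal.ofReal (x ^ s)) E = ∞),
    ENNReal.ofReal s

/-- The packing dimension of `E`: `dim_P E = sup {s > 0 : P^{h_s}(E) = ∞}`. -/
def packDim (A : ℝ) (E : Set ℝ) : ℝ≥0∞ :=
  ⨆ (s : ℝ) (_ : 0 < s) (_ : Ph A (fun x => ENNReal.ofReal (x ^ s)) E = ∞),
    ENNReal.ofReal s

/-- The pre-packing dimension of `E`: `dim_{P₀} E = sup {s > 0 : P₀^{h_s}(E) = ∞}`. -/
def prePackDim (A : ℝ) (E : Set ℝ) : ℝ≥0∞ :=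
  ⨆ (s : ℝ) (_ : 0 < s) (_ : P0h A (fun x => ENNReal.ofReal (x ^ s)) E = ∞),
    ENNReal.ofReal s

/-- `f ≼ h` on the set `S`, for real-valued functions. -/
def RLeqOn (S : Set ℝ) (f h : ℝ → ℝ) : Prop :=
  ∃ c : ℝ, 0 < c ∧ ∀ x ∈ S, f x ≤ c * h x

/-- `f ≡ h` on the set `S`, for real-valued functions. -/
def REquivOn (S : Set ℝ) (f h : ℝ → ℝ) : Prop := RLeqOn S f h ∧ RLeqOn S h f

/-- Real-valued version of `IsAssociated`: `h : (0,A] → (0,∞)` is increasing,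
continuous, positive and `{h(r_n/n)} ≡ {1/n}`. -/
def IsAssociatedR (A : ℝ) (h : ℝ → ℝ) (a : ℕ → ℝ) : Prop :=
  ContinuousOn h (Set.Ioc 0 A) ∧ StrictMonoOn h (Set.Ioc 0 A) ∧
  (∀ x ∈ Set.Ioc (0 : ℝ) A, 0 < h x) ∧
  ∃ c₁ c₂ : ℝ, 0 < c₁ ∧ ∀ n : ℕ,
    c₁ ≤ ((n : ℝ) + 1) * h (rTail a n / ((n : ℝ) + 1)) ∧
    ((n : ℝ) + 1) * h (rTail a n / ((n : ℝ) + 1)) ≤ c₂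

end

/-!
Let `τ` be a doubling constant of `h`. We compare the two quantities by `τ P₀^h(C_a) ≤ P^h(C_a)`.

*Finite pre-measure.* Let `K` be compact with `P₀^h(K) < ∞`. Every `E` has, for each `ε > 0`, a
thickening `E_η` with `τ P₀^h(K ∩ E_η) ≤ P₀^h(E) + ε`. Otherwise every `K ∩ E_η` carries, at every
small scale, a packing which is too heavy to be moved into `E`, so that a fixed mass of it lies in
balls away from `E`. Choosing `η` much smaller than all radii used before, one adds such families
one after the other to a packing of arbitrarily large mass, which contradicts `P₀^h(K) < ∞`. Given
`K = ⋃ Eᵢ`, finitely many of these thickenings cover `K`, and `P₀^h` is finitely subadditive.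

*Infinite pre-measure.* If `C_a = ⋃ Eᵢ`, then by Baire's theorem some `closure Eᵢ` contains a piece
`C_a ∩ I` with `I` a step-`K` interval. Any node of level `K + 1` has a larger heap index than the
node of `I`, so its gaps are bounded by those of the corresponding nodes below `I`; matching left
endpoints therefore gives an expanding map from its piece into `C_a ∩ I`, and an expanding map
turns packings into packings. As `C_a` consists of `2 ^ (K + 1)` such pieces, `P₀^h(C_a ∩ I) = ∞`.
By the doubling condition the closure does not matter, and `P₀^h(Eᵢ) = ∞`.
-/

/-- The doubling condition with constant `τ` on `(0, A]`: the part of the notion of a dimension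
function which the comparison of the packing measure with the pre-measure rests on. -/
def IsDoublingWith (A : ℝ) (τ : ℝ≥0∞) (h : ℝ → ℝ≥0∞) : Prop :=
  ∀ x : ℝ, 0 < x → 2 * x ≤ A → τ * h (2 * x) ≤ h x

/-- The supremum of `∑ h(|Bᵢ|)` over all `δ`-packings of `E`, whose limit as `δ → 0⁺` is the
packing pre-measure. -/
noncomputable def packingSup (h : ℝ → ℝ≥0∞) (δ : ℝ) (E : Set ℝ) : ℝ≥0∞ :=
  ⨆ (P : Set (ℝ × ℝ)) (_ : IsPacking E δ P), ∑' p : P, h (2 * (p : ℝ × ℝ).2)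

/-- A finite `δ`-packing of `E` by the balls of centres `x i` and radii `r i`, `i ∈ T`.
Disjointness of the balls is expressed by the distances of their centres, which is equivalent on
the real line and is easy to check for moved or shrunk balls. -/
structure IsFinPacking {ι : Type*} (E : Set ℝ) (δ : ℝ) (T : Finset ι) (x r : ι → ℝ) : Prop where
  center_mem : ∀ i ∈ T, x i ∈ E
  radius_pos : ∀ i ∈ T, 0 < r i
  diam_lt : ∀ i ∈ T, 2 * r i < δ
  separated : (T : Set ι).Pairwise fun i j => r i + r j ≤ dist (x i) (x j)

/-! ### Packings of subsets of the line -/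

section Packings

variable {ι : Type*} {E F : Set ℝ} {δ δ' A : ℝ} {S T : Finset ι} {x y r s : ι → ℝ}
  {h : ℝ → ℝ≥0∞} {c τ : ℝ≥0∞}

namespace IsFinPacking

theorem mono (hT : IsFinPacking E δ T x r) (hST : S ⊆ T) (hF : ∀ i ∈ S, x i ∈ F) (hδ : δ ≤ δ') :
    IsFinPacking F δ' S x r where
  center_mem := hF
  radius_pos i hi := hT.radius_pos i (hST hi)
  diam_lt i hi := (hT.diam_lt i (hST hi)).trans_le hδ
  separated := hT.separated.mono (Finset.coe_subset.2 hST)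

theorem subset (hT : IsFinPacking E δ T x r) (hST : S ⊆ T) : IsFinPacking E δ S x r :=
  hT.mono hST (fun i hi => hT.center_mem i (hST hi)) le_rfl

theorem union [DecidableEq ι] (hS : IsFinPacking E δ S x r) (hT : IsFinPacking E δ T x r)
    (hST : ∀ i ∈ S, ∀ j ∈ T, r i + r j ≤ dist (x i) (x j)) :
    IsFinPacking E δ (S ∪ T) x r where
  center_mem := Finset.forall_mem_union.2 ⟨hS.center_mem, hT.center_mem⟩
  radius_pos := Finset.forall_mem_union.2 ⟨hS.radius_pos, hT.radius_pos⟩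
  diam_lt := Finset.forall_mem_union.2 ⟨hS.diam_lt, hT.diam_lt⟩
  separated := by
    rw [Finset.coe_union, pairwise_union]
    exact ⟨hS.separated, hT.separated, fun i hi j hj _ =>
      ⟨hST i hi j hj, by rw [add_comm, dist_comm]; exact hST i hi j hj⟩⟩

theorem perturb (hT : IsFinPacking E δ T x r) (hy : ∀ i ∈ T, y i ∈ F) (hs : ∀ i ∈ T, 0 < s i)
    (hxy : ∀ i ∈ T, dist (x i) (y i) + s i ≤ r i) : IsFinPacking F δ T y s where
  center_mem := hy
  radius_pos := hs
  diam_lt i hi := by linarith [hT.diam_lt i hi, hxy i hi, dist_nonneg (x := x i) (y := y i)]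
  separated i hi j hj hij := by
    have hdist := dist_triangle4 (x i) (y i) (y j) (x j)
    rw [dist_comm (y j)] at hdist
    linarith [hT.separated hi hj hij, hxy i hi, hxy j hj]

theorem expand (hT : IsFinPacking E δ T x r) (hy : ∀ i ∈ T, y i ∈ F)
    (hxy : ∀ i ∈ T, ∀ j ∈ T, dist (x i) (x j) ≤ dist (y i) (y j)) : IsFinPacking F δ T y r where
  center_mem := hy
  radius_pos := hT.radius_pos
  diam_lt := hT.diam_lt
  separated i hi j hj hij := (hT.separated hi hj hij).trans (hxy i hi j hj)

theorem shrink (hT : IsFinPacking E δ T x r) (hs : ∀ i ∈ T, 0 < s i) (hsr : ∀ i ∈ T, s i ≤ r i) :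
    IsFinPacking E δ T x s :=
  hT.perturb hT.center_mem hs fun i hi => by simpa only [dist_self, zero_add] using hsr i hi

theorem exists_pos_le_radius (hT : IsFinPacking E δ T x r) : ∃ ρ > 0, ∀ i ∈ T, ρ ≤ r i := by
  have hle : ∀ᶠ ρ in 𝓝[>] (0 : ℝ), ∀ i ∈ T, ρ ≤ r i :=
    (eventually_all_finset T).2 fun i hi =>
      ((eventually_lt_nhds (hT.radius_pos i hi)).filter_mono nhdsWithin_le_nhds).mono
        fun _ => le_of_lt
  exact (eventually_mem_nhdsWithin.and hle).exists

theorem injOn_ball (hT : IsFinPacking E δ T x r) : InjOn (fun i => (x i, r i)) (T : Set ι) := by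
  intro i hi j hj hij
  by_contra hne
  obtain ⟨hx, -⟩ := Prod.mk.inj hij
  have hsep : r i + r j ≤ dist (x i) (x j) := hT.separated hi hj hne
  rw [hx, dist_self] at hsep
  linarith [hT.radius_pos i hi, hT.radius_pos j hj]

theorem isPacking_image (hT : IsFinPacking E δ T x r) :
    IsPacking E δ ((fun i => (x i, r i)) '' (T : Set ι)) := by
  refine ⟨T.countable_toSet.image _, forall_mem_image.2 fun i hi =>
    ⟨hT.center_mem i hi, hT.radius_pos i hi, hT.diam_lt i hi⟩, ?_⟩
  rintro _ ⟨i, hi, rfl⟩ _ ⟨j, hj, rfl⟩ hij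
  exact (disjoint_ball_ball_iff (hT.radius_pos i hi) (hT.radius_pos j hj)).2
    (hT.separated hi hj fun e => hij (e ▸ rfl))

theorem sum_le_packingSup (hT : IsFinPacking E δ T x r) :
    ∑ i ∈ T, h (2 * r i) ≤ packingSup h δ E :=
  calc ∑ i ∈ T, h (2 * r i)
      = ∑' i : (T : Set ι), h (2 * r i) := (T.tsum_subtype' fun i => h (2 * r i)).symm
    _ = ∑' p : (fun i => (x i, r i)) '' (T : Set ι), h (2 * (p : ℝ × ℝ).2) :=
        (tsum_image (fun p : ℝ × ℝ => h (2 * p.2)) hT.injOn_ball).symm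
    _ ≤ packingSup h δ E :=
        le_iSup₂ (f := fun (P : Set (ℝ × ℝ)) (_ : IsPacking E δ P) =>
          ∑' p : P, h (2 * (p : ℝ × ℝ).2)) _ hT.isPacking_image

end IsFinPacking

theorem IsPacking.isFinPacking {P : Set (ℝ × ℝ)} (hP : IsPacking E δ P) {T : Finset (ℝ × ℝ)}
    (hT : (T : Set (ℝ × ℝ)) ⊆ P) : IsFinPacking E δ T Prod.fst Prod.snd where
  center_mem p hp := (hP.2.1 p (hT hp)).1
  radius_pos p hp := (hP.2.1 p (hT hp)).2.1
  diam_lt p hp := (hP.2.1 p (hT hp)).2.2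
  separated p hp q hq hpq :=
    (disjoint_ball_ball_iff (hP.2.1 p (hT hp)).2.1 (hP.2.1 q (hT hq)).2.1).1
      (hP.2.2 (hT hp) (hT hq) hpq)

theorem mul_packingSup_le
    (H : ∀ T : Finset (ℝ × ℝ), IsFinPacking E δ T Prod.fst Prod.snd →
      τ * ∑ p ∈ T, h (2 * p.2) ≤ c) :
    τ * packingSup h δ E ≤ c := by
  simp only [packingSup, ENNReal.mul_iSup, ENNReal.tsum_eq_iSup_sum, iSup_le_iff]
  intro P hP s
  simpa only [Finset.sum_map, Function.Embedding.subtype_apply] using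
    H _ (hP.isFinPacking (Finset.map_subtype_subset s))

theorem packingSup_le
    (H : ∀ T : Finset (ℝ × ℝ), IsFinPacking E δ T Prod.fst Prod.snd →
      ∑ p ∈ T, h (2 * p.2) ≤ c) :
    packingSup h δ E ≤ c := by
  simpa only [one_mul] using mul_packingSup_le (τ := 1) fun T hT => (one_mul _).trans_le (H T hT)

theorem packingSup_mono (hδ : δ ≤ δ') (hEF : E ⊆ F) : packingSup h δ E ≤ packingSup h δ' F :=
  packingSup_le fun _ hT =>
    (hT.mono subset_rfl (fun p hp => hEF (hT.center_mem p hp)) hδ).sum_le_packingSup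

theorem packingSup_union_le :
    packingSup h δ (E ∪ F) ≤ packingSup h δ E + packingSup h δ F := by
  classical
  refine packingSup_le fun T hT => ?_
  rw [← Finset.sum_filter_add_sum_filter_not T (fun p => p.1 ∈ E)]
  refine add_le_add
    (hT.mono (T.filter_subset _) (fun p hp => ?_) le_rfl).sum_le_packingSup
    (hT.mono (T.filter_subset _) (fun p hp => ?_) le_rfl).sum_le_packingSup
  · exact (Finset.mem_filter.1 hp).2
  · obtain ⟨hpT, hpE⟩ := Finset.mem_filter.1 hp
    exact (hT.center_mem p hpT).resolve_left hpE

theorem IsDoublingWith.mul_sum_le (hh : IsDoublingWith A τ h) (hδ : δ ≤ A)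
    (hT : IsFinPacking E δ T x r) :
    τ * ∑ i ∈ T, h (2 * r i) ≤ ∑ i ∈ T, h (2 * (r i / 2)) := by
  rw [Finset.mul_sum]
  refine Finset.sum_le_sum fun i hi => ?_
  rw [mul_div_cancel₀ (r i) two_ne_zero]
  exact hh (r i) (hT.radius_pos i hi) ((hT.diam_lt i hi).le.trans hδ)

theorem IsDoublingWith.mul_sum_le_packingSup_of_near (hh : IsDoublingWith A τ h) (hδ : δ ≤ A)
    (hT : IsFinPacking E δ T x r) (hF : ∀ i ∈ T, ∃ y ∈ F, dist (x i) y < r i / 2) :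
    τ * ∑ i ∈ T, h (2 * r i) ≤ packingSup h δ F := by
  choose! y hyF hy using hF
  have hmoved : IsFinPacking F δ T y fun i => r i / 2 :=
    hT.perturb hyF (fun i hi => half_pos (hT.radius_pos i hi)) fun i hi => by linarith [hy i hi]
  exact (hh.mul_sum_le hδ hT).trans hmoved.sum_le_packingSup

theorem IsDoublingWith.mul_packingSup_closure_le (hh : IsDoublingWith A τ h) (hδ : δ ≤ A) :
    τ * packingSup h δ (closure E) ≤ packingSup h δ E :=
  mul_packingSup_le fun _ hT => hh.mul_sum_le_packingSup_of_near hδ hT fun p hp =>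
    Metric.mem_closure_iff.1 (hT.center_mem p hp) _ (half_pos (hT.radius_pos p hp))

theorem P0h_eq_iInf (A : ℝ) (h : ℝ → ℝ≥0∞) (E : Set ℝ) :
    P0h A h E = ⨅ δ : Ioc 0 A, packingSup h δ E := by
  simp only [P0h, packingSup, iInf_subtype, mem_Ioc, iInf_and]

theorem P0h_le_packingSup (hδ : δ ∈ Ioc 0 A) : P0h A h E ≤ packingSup h δ E :=
  (P0h_eq_iInf A h E).trans_le (iInf_le (fun δ : Ioc 0 A => packingSup h δ E) ⟨δ, hδ⟩)

theorem mul_P0h_le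
    (H : ∀ δ ∈ Ioc 0 A, τ * packingSup h δ E ≤ packingSup h δ F) :
    τ * P0h A h E ≤ P0h A h F := by
  rw [P0h_eq_iInf A h F]
  exact le_iInf fun δ => (mul_le_mul_right (P0h_le_packingSup δ.2) τ).trans (H δ δ.2)

theorem P0h_mono (hEF : E ⊆ F) : P0h A h E ≤ P0h A h F := by
  rw [P0h_eq_iInf, P0h_eq_iInf]
  exact iInf_mono fun δ => packingSup_mono le_rfl hEF

theorem P0h_union_le : P0h A h (E ∪ F) ≤ P0h A h E + P0h A h F := by
  simp only [P0h_eq_iInf]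
  rw [ENNReal.iInf_add_iInf]
  · exact iInf_mono fun δ => packingSup_union_le
  · exact fun δ δ' => ⟨min δ δ', add_le_add
      (packingSup_mono (min_le_left _ _) le_rfl) (packingSup_mono (min_le_right _ _) le_rfl)⟩

theorem P0h_empty (hA : 0 < A) : P0h A h ∅ = 0 :=
  le_bot_iff.1 <| (P0h_le_packingSup (right_mem_Ioc.2 hA)).trans <| packingSup_le fun T hT => by
    rw [Finset.eq_empty_of_forall_notMem hT.center_mem, Finset.sum_empty, bot_eq_zero]

theorem P0h_biUnion_le (hA : 0 < A) (T : Finset ι) (E : ι → Set ℝ) :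
    P0h A h (⋃ i ∈ T, E i) ≤ ∑ i ∈ T, P0h A h (E i) := by
  classical
  induction T using Finset.induction_on with
  | empty => simp [P0h_empty hA]
  | insert i T hi ih =>
    rw [Finset.set_biUnion_insert, Finset.sum_insert hi]
    exact P0h_union_le.trans (add_le_add le_rfl ih)

theorem IsDoublingWith.mul_P0h_closure_le (hh : IsDoublingWith A τ h) :
    τ * P0h A h (closure E) ≤ P0h A h E :=
  mul_P0h_le fun _ hδ => hh.mul_packingSup_closure_le hδ.2

end Packings

/-! ### Compact sets of finite pre-measure -/

section Thickenings

variable {ι : Type*} {E K : Set ℝ} {δ A : ℝ} {x r : ι → ℝ} {h : ℝ → ℝ≥0∞} {c ε τ : ℝ≥0∞}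

theorem IsDoublingWith.exists_isFinPacking_far (hh : IsDoublingWith A τ h) (hδ : δ ≤ A)
    (hlt : packingSup h δ E + ε < τ * packingSup h δ K) :
    ∃ T : Finset (ℝ × ℝ), IsFinPacking K δ T Prod.fst (fun p => p.2 / 4) ∧
      (∀ p ∈ T, ∀ z ∈ E, 2 * (p.2 / 4) ≤ dist p.1 z) ∧
      τ * ε ≤ ∑ p ∈ T, h (2 * (p.2 / 4)) := by
  classical
  obtain ⟨T, hT, hTlt⟩ : ∃ T : Finset (ℝ × ℝ), IsFinPacking K δ T Prod.fst Prod.snd ∧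
      packingSup h δ E + ε < τ * ∑ p ∈ T, h (2 * p.2) := by
    contrapose! hlt
    exact mul_packingSup_le hlt
  let near : ℝ × ℝ → Prop := fun p => ∃ z ∈ E, dist p.1 z < p.2 / 2
  have hnear : IsFinPacking K δ (T.filter near) Prod.fst Prod.snd :=
    hT.subset (T.filter_subset _)
  have hfar : IsFinPacking K δ (T.filter (¬ near ·)) Prod.fst Prod.snd :=
    hT.subset (T.filter_subset _)
  have hsum_far : ε < τ * ∑ p ∈ T with ¬ near p, h (2 * p.2) := by
    rw [← Finset.sum_filter_add_sum_filter_not T near, mul_add] at hTlt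
    refine lt_of_add_lt_add_left (hTlt.trans_le ?_)
    gcongr
    exact hh.mul_sum_le_packingSup_of_near hδ hnear fun p hp => (Finset.mem_filter.1 hp).2
  have hhalf : IsFinPacking K δ (T.filter (¬ near ·)) Prod.fst (fun p => p.2 / 2) :=
    hfar.shrink (fun p hp => by linarith [hfar.radius_pos p hp])
      fun p hp => by linarith [hfar.radius_pos p hp]
  refine ⟨T.filter (¬ near ·), hfar.shrink (fun p hp => by linarith [hfar.radius_pos p hp])
    fun p hp => by linarith [hfar.radius_pos p hp], fun p hp z hz => ?_, ?_⟩
  · have hpz : p.2 / 2 ≤ dist p.1 z := by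
      by_contra! hlt
      exact (Finset.mem_filter.1 hp).2 ⟨z, hz, hlt⟩
    linarith
  · calc τ * ε ≤ τ * (τ * ∑ p ∈ T with ¬ near p, h (2 * p.2)) := by gcongr
      _ ≤ τ * ∑ p ∈ T with ¬ near p, h (2 * (p.2 / 2)) := by gcongr; exact hh.mul_sum_le hδ hfar
      _ ≤ ∑ p ∈ T with ¬ near p, h (2 * (p.2 / 2 / 2)) := hh.mul_sum_le hδ hhalf
      _ = ∑ p ∈ T with ¬ near p, h (2 * (p.2 / 4)) := by simp only [div_div]; norm_num

theorem exists_isFinPacking_nsmul_le_sum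
    (H : ∀ η > 0, ∃ T : Finset ι, IsFinPacking (K ∩ thickening η E) δ T x r ∧
      (∀ i ∈ T, ∀ z ∈ E, 2 * r i ≤ dist (x i) z) ∧ c ≤ ∑ i ∈ T, h (2 * r i)) (N : ℕ) :
    ∃ T : Finset ι, IsFinPacking K δ T x r ∧
      (∀ i ∈ T, ∀ z ∈ E, 2 * r i ≤ dist (x i) z) ∧ N • c ≤ ∑ i ∈ T, h (2 * r i) := by
  classical
  induction N with
  | zero => exact ⟨∅, ⟨by simp, by simp, by simp, by simp⟩, by simp, by simp⟩
  | succ N ih =>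
    obtain ⟨S, hS, hSE, hSc⟩ := ih
    obtain ⟨η, hη, hηS⟩ := hS.exists_pos_le_radius
    obtain ⟨T, hT, hTE, hTc⟩ := H (η / 2) (half_pos hη)
    have hcross : ∀ i ∈ S, ∀ j ∈ T, r i + r j ≤ dist (x i) (x j) := by
      intro i hi j hj
      obtain ⟨z, hz, hjz⟩ := mem_thickening_iff.1 (hT.center_mem j hj).2
      linarith [hSE i hi z hz, hTE j hj z hz, dist_triangle (x i) (x j) z, hηS i hi]
    have hdisj : Disjoint S T := Finset.disjoint_left.2 fun i hiS hiT => by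
      linarith [hcross i hiS i hiT, dist_self (x i), hS.radius_pos i hiS]
    refine ⟨S ∪ T, hS.union (hT.mono subset_rfl (fun i hi => (hT.center_mem i hi).1) le_rfl) hcross,
      Finset.forall_mem_union.2 ⟨hSE, hTE⟩, ?_⟩
    rw [Finset.sum_union hdisj, succ_nsmul]
    exact add_le_add hSc hTc

theorem packingSup_eq_top_of_forall_thickening (hc : c ≠ 0)
    (H : ∀ η > 0, ∃ T : Finset ι, IsFinPacking (K ∩ thickening η E) δ T x r ∧
      (∀ i ∈ T, ∀ z ∈ E, 2 * r i ≤ dist (x i) z) ∧ c ≤ ∑ i ∈ T, h (2 * r i)) :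
    packingSup h δ K = ∞ := by
  by_contra hfin
  obtain ⟨N, hN⟩ := ENNReal.exists_nat_mul_gt hc hfin
  obtain ⟨T, hT, -, hsum⟩ := exists_isFinPacking_nsmul_le_sum H N
  rw [nsmul_eq_mul] at hsum
  exact (hN.trans_le hsum).not_ge hT.sum_le_packingSup

theorem IsDoublingWith.exists_mul_P0h_inter_thickening_le (hh : IsDoublingWith A τ h)
    (hK : P0h A h K ≠ ∞) (hε : ε ≠ 0) :
    ∃ η > 0, τ * P0h A h (K ∩ thickening η E) ≤ P0h A h E + ε := by
  by_contra! hlarge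
  have hτ : τ ≠ 0 := by
    rintro rfl
    simpa only [zero_mul, not_lt_zero] using hlarge 1 one_pos
  have hE : P0h A h E ≠ ∞ := by
    intro htop
    simpa only [htop, top_add, not_top_lt] using hlarge 1 one_pos
  have hε2 : ε / 2 ≠ 0 := (ENNReal.half_pos hε).ne'
  obtain ⟨⟨δ₀, hδ₀⟩, hEδ₀⟩ : ∃ δ : Ioc 0 A, packingSup h δ E < P0h A h E + ε / 2 :=
    iInf_lt_iff.1 ((P0h_eq_iInf A h E).symm.trans_lt (ENNReal.lt_add_right hE hε2))
  refine hK ((P0h_eq_iInf A h K).trans (iInf_eq_top.2 ?_))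
  rintro ⟨δ, hδ⟩
  have hδ' : min δ δ₀ ∈ Ioc 0 A := ⟨lt_min hδ.1 hδ₀.1, (min_le_left _ _).trans hδ.2⟩
  refine top_le_iff.1 (le_trans (top_le_iff.2 ?_) (packingSup_mono (min_le_left δ δ₀) le_rfl))
  refine packingSup_eq_top_of_forall_thickening (E := E) (mul_ne_zero hτ hε2) fun η hη =>
    hh.exists_isFinPacking_far hδ'.2 ?_
  calc packingSup h (min δ δ₀) E + ε / 2
      ≤ P0h A h E + ε / 2 + ε / 2 := by
        gcongr
        exact (packingSup_mono (min_le_right δ δ₀) le_rfl).trans hEδ₀.le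
    _ = P0h A h E + ε := by rw [add_assoc, ENNReal.add_halves]
    _ < τ * P0h A h (K ∩ thickening η E) := hlarge η hη
    _ ≤ τ * packingSup h (min δ δ₀) (K ∩ thickening η E) := by
        gcongr
        exact P0h_le_packingSup hδ'

theorem IsDoublingWith.mul_P0h_le_Ph (hh : IsDoublingWith A τ h) (hA : 0 < A)
    (hKc : IsCompact K) (hK : P0h A h K ≠ ∞) : τ * P0h A h K ≤ Ph A h K := by
  refine le_iInf₂ fun t ht => ENNReal.le_of_forall_pos_le_add fun ε hε _ => ?_
  obtain ⟨e, he, hesum⟩ := ENNReal.exists_pos_sum_of_countable' (ENNReal.coe_pos.2 hε).ne' ℕ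
  choose η hη hle using fun i =>
    hh.exists_mul_P0h_inter_thickening_le (E := t i) hK (he i).ne'
  obtain ⟨s, hs⟩ : ∃ s : Finset ℕ, K ⊆ ⋃ i ∈ s, thickening (η i) (t i) :=
    hKc.elim_finite_subcover _ (fun i => isOpen_thickening)
      (ht.subset.trans (iUnion_mono fun i => self_subset_thickening (hη i) (t i)))
  have hcover : K ⊆ ⋃ i ∈ s, K ∩ thickening (η i) (t i) := by
    rw [← inter_iUnion₂]
    exact subset_inter subset_rfl hs
  calc τ * P0h A h K
      ≤ τ * ∑ i ∈ s, P0h A h (K ∩ thickening (η i) (t i)) := by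
        gcongr
        exact (P0h_mono hcover).trans (P0h_biUnion_le hA s _)
    _ ≤ ∑ i ∈ s, (P0h A h (t i) + e i) := by
        rw [Finset.mul_sum]
        exact Finset.sum_le_sum fun i _ => hle i
    _ ≤ ∑' i, (P0h A h (t i) + e i) := ENNReal.sum_le_tsum s
    _ = ∑' i, P0h A h (t i) + ∑' i, e i := ENNReal.tsum_add
    _ ≤ ∑' i, P0h A h (t i) + ε := by gcongr

end Thickenings

theorem exists_inter_ball_subset_closure {X ι : Type*} [PseudoMetricSpace X]
    [Countable ι] {K : Set X} (hK : IsComplete K) (hne : K.Nonempty) {t : ι → Set X}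
    (ht : K ⊆ ⋃ i, t i) : ∃ i, ∃ x ∈ K, ∃ ρ > 0, K ∩ ball x ρ ⊆ closure (t i) := by
  have : CompleteSpace K := hK.completeSpace_coe
  have : Nonempty K := hne.to_subtype
  obtain ⟨i, x, hx⟩ := nonempty_interior_of_iUnion_of_closed
    (f := fun i => ((↑) ⁻¹' closure (t i) : Set K))
    (fun i => isClosed_closure.preimage continuous_subtype_val) <| by
      rw [← preimage_iUnion, preimage_eq_univ_iff, Subtype.range_coe]
      exact ht.trans (iUnion_mono fun i => subset_closure)
  obtain ⟨ρ, hρ, hball⟩ := Metric.mem_nhds_iff.1 (mem_interior_iff_mem_nhds.1 hx)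
  exact ⟨i, x, x.2, ρ, hρ, fun y hy => hball (show (⟨y, hy.1⟩ : K) ∈ ball x ρ from hy.2)⟩

/-! ### The gap tree -/

section CantorTree

variable {a : ℕ → ℝ}

theorem nonneg_of_antitone_of_summable (amono : Antitone a) (asum : Summable a) : 0 ≤ a :=
  fun n => amono.le_of_tendsto asum.tendsto_atTop_zero n

/-- The total length of the gaps which lie `k` generations below the node `m` of the gap tree, so
that `nodeLen a m` is the sum of `nodeTerm a m k` over `k`. -/
def nodeTerm (a : ℕ → ℝ) (m k : ℕ) : ℝ := ∑ i ∈ Finset.range (2 ^ k), a (m * 2 ^ k + i - 1)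

theorem nodeTerm_nonneg (ha : 0 ≤ a) (m k : ℕ) : 0 ≤ nodeTerm a m k :=
  Finset.sum_nonneg fun _ _ => ha _

theorem antitone_nodeTerm (amono : Antitone a) (k : ℕ) : Antitone fun m => nodeTerm a m k :=
  fun _ _ hm => Finset.sum_le_sum fun _ _ => amono (by gcongr)

theorem sum_range_nodeTerm_one (n : ℕ) :
    ∑ k ∈ Finset.range n, nodeTerm a 1 k = ∑ i ∈ Finset.range (2 ^ n - 1), a i := by
  induction n with
  | zero => simp
  | succ n ih =>
    have hpow : 2 ^ (n + 1) - 1 = (2 ^ n - 1) + 2 ^ n := by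
      have := Nat.one_le_two_pow (n := n)
      rw [pow_succ]
      omega
    rw [Finset.sum_range_succ, ih, hpow, Finset.sum_range_add]
    congr 1
    exact Finset.sum_congr rfl fun i _ => by rw [one_mul, Nat.sub_add_comm Nat.one_le_two_pow]

theorem summable_nodeTerm (amono : Antitone a) (asum : Summable a) {m : ℕ} (hm : 1 ≤ m) :
    Summable (nodeTerm a m) := by
  have ha := nonneg_of_antitone_of_summable amono asum
  have hroot : Summable (nodeTerm a 1) :=
    summable_of_sum_range_le (c := ∑' i, a i) (nodeTerm_nonneg ha 1) fun n => by
      rw [sum_range_nodeTerm_one]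
      exact asum.sum_le_tsum _ fun i _ => ha i
  exact hroot.of_nonneg_of_le (nodeTerm_nonneg ha m) fun k => antitone_nodeTerm amono k hm

theorem nodeLen_nonneg (ha : 0 ≤ a) (m : ℕ) : 0 ≤ nodeLen a m :=
  tsum_nonneg fun k => nodeTerm_nonneg ha m k

theorem nodeLen_le_nodeLen (amono : Antitone a) (asum : Summable a) {m n : ℕ} (hm : 1 ≤ m)
    (hmn : m ≤ n) : nodeLen a n ≤ nodeLen a m :=
  Summable.tsum_le_tsum (fun k => antitone_nodeTerm amono k hmn)
    (summable_nodeTerm amono asum (hm.trans hmn)) (summable_nodeTerm amono asum hm)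

theorem nodeTerm_succ (m k : ℕ) :
    nodeTerm a m (k + 1) = nodeTerm a (2 * m) k + nodeTerm a (2 * m + 1) k := by
  simp only [nodeTerm, pow_succ, mul_two (2 ^ k), Finset.sum_range_add]
  congr! 4 <;> ring_nf

theorem nodeLen_eq_add (amono : Antitone a) (asum : Summable a) {m : ℕ} (hm : 1 ≤ m) :
    nodeLen a m = a (m - 1) + nodeLen a (2 * m) + nodeLen a (2 * m + 1) :=
  calc nodeLen a m
      = nodeTerm a m 0 + ∑' k, nodeTerm a m (k + 1) :=
        (summable_nodeTerm amono asum hm).tsum_eq_zero_add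
    _ = a (m - 1) + ∑' k, (nodeTerm a (2 * m) k + nodeTerm a (2 * m + 1) k) := by
        simp only [nodeTerm_succ]
        simp [nodeTerm]
    _ = a (m - 1) + nodeLen a (2 * m) + nodeLen a (2 * m + 1) := by
        rw [(summable_nodeTerm amono asum (by omega)).tsum_add
          (summable_nodeTerm amono asum (by omega)), ← add_assoc]
        rfl

theorem tendsto_nodeTerm (asum : Summable a) (k : ℕ) :
    Tendsto (fun m => nodeTerm a m k) atTop (𝓝 0) := by
  rw [← Finset.sum_const_zero (s := Finset.range (2 ^ k))]
  refine tendsto_finsetSum _ fun i _ => asum.tendsto_atTop_zero.comp ?_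
  refine tendsto_atTop_mono (fun m => ?_) (tendsto_sub_atTop_nat 1)
  have := Nat.le_mul_of_pos_right m (Nat.two_pow_pos k)
  omega

theorem tendsto_nodeLen (amono : Antitone a) (asum : Summable a) :
    Tendsto (nodeLen a) atTop (𝓝 0) := by
  rw [← tsum_zero (α := ℝ) (β := ℕ)]
  refine tendsto_tsum_of_dominated_convergence (summable_nodeTerm amono asum le_rfl)
    (tendsto_nodeTerm asum) ?_
  filter_upwards [eventually_ge_atTop 1] with m hm k
  have ha := nonneg_of_antitone_of_summable amono asum
  rw [← nodeTerm, Real.norm_of_nonneg (nodeTerm_nonneg ha m k)]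
  exact antitone_nodeTerm amono k hm

theorem exists_level_nodeLen_lt (amono : Antitone a) (asum : Summable a) {ρ : ℝ} (hρ : 0 < ρ) :
    ∃ k, ∀ l ≥ k, ∀ j, nodeLen a (2 ^ l + j) < ρ := by
  obtain ⟨k, hk⟩ := eventually_atTop.1 ((tendsto_nodeLen amono asum).eventually (gt_mem_nhds hρ))
  exact ⟨k, fun l hl j => hk _ (hl.trans (l.lt_two_pow_self.le.trans (Nat.le_add_right _ j)))⟩

theorem leftEnd_two_mul (k j : ℕ) : leftEnd a (k + 1) (2 * j) = leftEnd a k j := by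
  simp [leftEnd]

theorem leftEnd_two_mul_add_one (k j : ℕ) :
    leftEnd a (k + 1) (2 * j + 1) =
      leftEnd a k j + nodeLen a (2 * (2 ^ k + j)) + a (2 ^ k + j - 1) := by
  have hdiv : (2 * j + 1) / 2 = j := by omega
  have hsibling : 2 ^ (k + 1) + (2 * j + 1) - 1 = 2 * (2 ^ k + j) := by rw [pow_succ]; omega
  rw [leftEnd, if_neg (by omega), hdiv, hsibling]

theorem leftEnd_two_pow_mul (K k j : ℕ) : leftEnd a (K + k) (2 ^ k * j) = leftEnd a K j := by
  induction k with
  | zero => simp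
  | succ k ih => rw [← add_assoc, pow_succ', mul_assoc, leftEnd_two_mul, ih]

/-- The length of the gap between the `j`-th and the `(j + 1)`-st step-`k` interval; it is
meaningful for `j + 1 < 2 ^ k` only. -/
noncomputable def stepGap (a : ℕ → ℝ) (k j : ℕ) : ℝ :=
  leftEnd a k (j + 1) - leftEnd a k j - nodeLen a (2 ^ k + j)

theorem stepGap_two_mul (k j : ℕ) : stepGap a (k + 1) (2 * j) = a (2 ^ k + j - 1) := by
  rw [stepGap, leftEnd_two_mul_add_one, leftEnd_two_mul, pow_succ', ← mul_add]
  ring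

theorem stepGap_two_mul_add_one (amono : Antitone a) (asum : Summable a) (k j : ℕ) :
    stepGap a (k + 1) (2 * j + 1) = stepGap a k j := by
  have hnode := nodeLen_eq_add amono asum (Nat.one_le_two_pow.trans (Nat.le_add_right (2 ^ k) j))
  rw [stepGap, stepGap, add_assoc (2 * j) 1 1, ← mul_add_one, leftEnd_two_mul,
    leftEnd_two_mul_add_one, pow_succ', ← add_assoc, ← mul_add, hnode]
  ring

theorem stepGap_nonneg (amono : Antitone a) (asum : Summable a) {k j : ℕ} (hj : j + 1 < 2 ^ k) :
    0 ≤ stepGap a k j := by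
  induction k generalizing j with
  | zero => omega
  | succ k ih =>
    rcases Nat.even_or_odd' j with ⟨i, rfl | rfl⟩
    · rw [stepGap_two_mul]
      exact nonneg_of_antitone_of_summable amono asum _
    · rw [stepGap_two_mul_add_one amono asum]
      exact ih (by rw [pow_succ] at hj; omega)

theorem leftEnd_le_leftEnd (amono : Antitone a) (asum : Summable a) {k i j : ℕ} (hij : i ≤ j)
    (hj : j < 2 ^ k) : leftEnd a k i ≤ leftEnd a k j := by
  induction j, hij using Nat.le_induction with
  | base => rfl
  | succ j _ ih =>
    have hgap := stepGap_nonneg amono asum hj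
    have hlen := nodeLen_nonneg (nonneg_of_antitone_of_summable amono asum) (2 ^ k + j)
    rw [stepGap] at hgap
    linarith [ih (by omega)]

theorem subtree_index_lt {K q k j : ℕ} (hq : q < 2 ^ K) (hj : j < 2 ^ k) :
    q * 2 ^ k + j < 2 ^ (K + k) := by
  have := Nat.mul_le_mul_right (2 ^ k) (Nat.succ_le_of_lt hq)
  rw [Nat.succ_mul] at this
  rw [pow_add]
  omega

section Subtrees

variable {K q K' q' : ℕ}

theorem stepGap_subtree_le (amono : Antitone a) (asum : Summable a)
    (hnode : 2 ^ K + q ≤ 2 ^ K' + q') {k j : ℕ} (hj : j + 1 < 2 ^ k) :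
    stepGap a (K' + k) (q' * 2 ^ k + j) ≤ stepGap a (K + k) (q * 2 ^ k + j) := by
  induction k generalizing j with
  | zero => omega
  | succ k ih =>
    have hmul (q : ℕ) : q * 2 ^ (k + 1) = 2 * (q * 2 ^ k) := by ring
    rcases Nat.even_or_odd' j with ⟨i, rfl | rfl⟩
    · rw [← add_assoc, ← add_assoc, hmul, hmul, ← mul_add, ← mul_add, stepGap_two_mul,
        stepGap_two_mul]
      refine amono (Nat.sub_le_sub_right ?_ 1)
      calc 2 ^ (K + k) + (q * 2 ^ k + i) = (2 ^ K + q) * 2 ^ k + i := by ring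
        _ ≤ (2 ^ K' + q') * 2 ^ k + i := by gcongr
        _ = 2 ^ (K' + k) + (q' * 2 ^ k + i) := by ring
    · rw [← add_assoc, ← add_assoc, hmul, hmul, ← add_assoc, ← add_assoc, ← mul_add, ← mul_add,
        stepGap_two_mul_add_one amono asum, stepGap_two_mul_add_one amono asum]
      exact ih (by rw [pow_succ] at hj; omega)

theorem leftEnd_sub_leftEnd_subtree_le (amono : Antitone a) (asum : Summable a)
    (hnode : 2 ^ K + q ≤ 2 ^ K' + q') {k i j : ℕ} (hij : i ≤ j) (hj : j < 2 ^ k) :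
    leftEnd a (K' + k) (q' * 2 ^ k + j) - leftEnd a (K' + k) (q' * 2 ^ k + i) ≤
      leftEnd a (K + k) (q * 2 ^ k + j) - leftEnd a (K + k) (q * 2 ^ k + i) := by
  induction j, hij using Nat.le_induction with
  | base => simp
  | succ j _ ih =>
    have hgap := stepGap_subtree_le amono asum hnode hj
    have hlen : nodeLen a (2 ^ (K' + k) + (q' * 2 ^ k + j)) ≤
        nodeLen a (2 ^ (K + k) + (q * 2 ^ k + j)) := by
      refine nodeLen_le_nodeLen amono asum (Nat.one_le_two_pow.trans (Nat.le_add_right _ _)) ?_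
      rw [← add_assoc, ← add_assoc, pow_add, pow_add, ← add_mul, ← add_mul]
      gcongr
    rw [stepGap, stepGap] at hgap
    rw [← add_assoc, ← add_assoc]
    linarith [ih (by omega)]

theorem dist_leftEnd_subtree_le (amono : Antitone a) (asum : Summable a)
    (hnode : 2 ^ K + q ≤ 2 ^ K' + q') (hq' : q' < 2 ^ K') {k i j : ℕ} (hi : i < 2 ^ k)
    (hj : j < 2 ^ k) :
    dist (leftEnd a (K' + k) (q' * 2 ^ k + i)) (leftEnd a (K' + k) (q' * 2 ^ k + j)) ≤
      dist (leftEnd a (K + k) (q * 2 ^ k + i)) (leftEnd a (K + k) (q * 2 ^ k + j)) := by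
  wlog hij : i ≤ j generalizing i j
  · simpa only [dist_comm] using this hj hi (le_of_not_ge hij)
  have hmono : leftEnd a (K' + k) (q' * 2 ^ k + i) ≤ leftEnd a (K' + k) (q' * 2 ^ k + j) :=
    leftEnd_le_leftEnd amono asum (by gcongr) (subtree_index_lt hq' hj)
  rw [dist_comm, Real.dist_eq, abs_of_nonneg (sub_nonneg.2 hmono), dist_comm, Real.dist_eq]
  exact (leftEnd_sub_leftEnd_subtree_le amono asum hnode hij hj).trans (le_abs_self _)

end Subtrees

/-- The `j`-th step-`k` interval of the Cantor construction. -/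
def stepInterval (a : ℕ → ℝ) (k j : ℕ) : Set ℝ :=
  Icc (leftEnd a k j) (leftEnd a k j + nodeLen a (2 ^ k + j))

theorem dist_le_nodeLen {k j : ℕ} {x y : ℝ} (hx : x ∈ stepInterval a k j)
    (hy : y ∈ stepInterval a k j) : dist x y ≤ nodeLen a (2 ^ k + j) :=
  (Real.dist_le_of_mem_Icc hx hy).trans (add_sub_cancel_left _ _).le

theorem leftEnd_mem_stepInterval (ha : 0 ≤ a) (k j : ℕ) : leftEnd a k j ∈ stepInterval a k j :=
  left_mem_Icc.2 (le_add_of_nonneg_right (nodeLen_nonneg ha _))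

theorem stepInterval_succ_subset (amono : Antitone a) (asum : Summable a) (k j : ℕ) :
    stepInterval a (k + 1) j ⊆ stepInterval a k (j / 2) := by
  have ha := nonneg_of_antitone_of_summable amono asum
  have hgap (i : ℕ) : 0 ≤ a (2 ^ k + i - 1) := ha _
  have hlen (i : ℕ) := nodeLen_eq_add amono asum (m := 2 ^ k + i)
    (Nat.one_le_two_pow.trans (Nat.le_add_right _ _))
  rcases Nat.even_or_odd' j with ⟨i, rfl | rfl⟩
  · rw [Nat.mul_div_cancel_left i two_pos, stepInterval, stepInterval, leftEnd_two_mul, pow_succ',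
      ← mul_add]
    exact Icc_subset_Icc_right
      (by linarith [hgap i, hlen i, nodeLen_nonneg ha (2 * (2 ^ k + i) + 1)])
  · rw [Nat.mul_add_div two_pos, Nat.div_eq_of_lt one_lt_two, add_zero, stepInterval, stepInterval,
      leftEnd_two_mul_add_one, pow_succ', ← add_assoc, ← mul_add]
    exact Icc_subset_Icc (by linarith [hgap i, nodeLen_nonneg ha (2 * (2 ^ k + i))])
      (by linarith [hlen i])

theorem stepInterval_add_subset (amono : Antitone a) (asum : Summable a) (K k j : ℕ) :
    stepInterval a (K + k) j ⊆ stepInterval a K (j / 2 ^ k) := by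
  induction k generalizing j with
  | zero => simp
  | succ k ih =>
    rw [pow_succ', ← Nat.div_div_eq_div_mul]
    exact (stepInterval_succ_subset amono asum (K + k) j).trans (ih (j / 2))

theorem mem_cantorSetOf_iff {x : ℝ} :
    x ∈ cantorSetOf a ↔ ∀ k, ∃ j < 2 ^ k, x ∈ stepInterval a k j := by
  simp only [cantorSetOf, mem_iInter, mem_iUnion, Finset.mem_range, exists_prop, stepInterval]

theorem leftEnd_mem_cantorSetOf (amono : Antitone a) (asum : Summable a) {k j : ℕ}
    (hj : j < 2 ^ k) : leftEnd a k j ∈ cantorSetOf a := by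
  have ha := nonneg_of_antitone_of_summable amono asum
  refine mem_cantorSetOf_iff.2 fun l => ?_
  rcases le_total k l with hkl | hlk
  · obtain ⟨d, rfl⟩ := Nat.exists_eq_add_of_le hkl
    refine ⟨2 ^ d * j, ?_, leftEnd_two_pow_mul (a := a) k d j ▸ leftEnd_mem_stepInterval ha _ _⟩
    rw [mul_comm]
    exact subtree_index_lt hj (Nat.two_pow_pos d)
  · obtain ⟨d, rfl⟩ := Nat.exists_eq_add_of_le hlk
    refine ⟨j / 2 ^ d, ?_,
      stepInterval_add_subset amono asum l d j (leftEnd_mem_stepInterval ha _ _)⟩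
    rwa [Nat.div_lt_iff_lt_mul (Nat.two_pow_pos d), ← pow_add]

theorem isCompact_cantorSetOf (a : ℕ → ℝ) : IsCompact (cantorSetOf a) := by
  have hstep (k : ℕ) : IsCompact (⋃ j ∈ Finset.range (2 ^ k),
      Icc (leftEnd a k j) (leftEnd a k j + nodeLen a (2 ^ k + j))) :=
    (Finset.range (2 ^ k)).isCompact_biUnion fun j _ => isCompact_Icc
  exact (hstep 0).of_isClosed_subset (isClosed_iInter fun k => (hstep k).isClosed)
    (iInter_subset _ 0)

/-! ### Packings of Cantor pieces -/

section CantorPieces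

variable {δ A : ℝ} {h : ℝ → ℝ≥0∞} {τ : ℝ≥0∞} {K q K' q' k : ℕ}

theorem IsDoublingWith.mul_sum_le_packingSup_of_subtree {ι : Type*} {E : Set ℝ} {T : Finset ι}
    {x r : ι → ℝ} {n : ι → ℕ} (hh : IsDoublingWith A τ h) (amono : Antitone a)
    (asum : Summable a) (hδ : δ ≤ A) (hT : IsFinPacking E δ T x r)
    (hnode : 2 ^ K + q ≤ 2 ^ K' + q') (hq : q < 2 ^ K) (hq' : q' < 2 ^ K')
    (hn : ∀ i ∈ T, n i < 2 ^ k)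
    (hx : ∀ i ∈ T, x i ∈ stepInterval a (K' + k) (q' * 2 ^ k + n i))
    (hlen : ∀ i ∈ T, nodeLen a (2 ^ (K' + k) + (q' * 2 ^ k + n i)) ≤ r i / 2) :
    τ * ∑ i ∈ T, h (2 * r i) ≤ packingSup h δ (cantorSetOf a ∩ stepInterval a K q) := by
  have ha := nonneg_of_antitone_of_summable amono asum
  have hleft : IsFinPacking univ δ T (fun i => leftEnd a (K' + k) (q' * 2 ^ k + n i))
      fun i => r i / 2 :=
    hT.perturb (fun _ _ => mem_univ _) (fun i hi => half_pos (hT.radius_pos i hi)) fun i hi => by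
      linarith [hlen i hi, dist_le_nodeLen (hx i hi) (leftEnd_mem_stepInterval ha _ _)]
  have hmoved : IsFinPacking (cantorSetOf a ∩ stepInterval a K q) δ T
      (fun i => leftEnd a (K + k) (q * 2 ^ k + n i)) fun i => r i / 2 := by
    refine hleft.expand (fun i hi => ⟨?_, ?_⟩) fun i hi j hj =>
      dist_leftEnd_subtree_le amono asum hnode hq' (hn i hi) (hn j hj)
    · exact leftEnd_mem_cantorSetOf amono asum (subtree_index_lt hq (hn i hi))
    · have hancestor : (q * 2 ^ k + n i) / 2 ^ k = q := by
        rw [mul_comm, Nat.mul_add_div (Nat.two_pow_pos k), Nat.div_eq_of_lt (hn i hi), add_zero]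
      have hsub := stepInterval_add_subset amono asum K k (q * 2 ^ k + n i)
      rw [hancestor] at hsub
      exact hsub (leftEnd_mem_stepInterval ha _ _)
  exact (hh.mul_sum_le hδ hT).trans hmoved.sum_le_packingSup

theorem IsDoublingWith.mul_packingSup_cantorSetOf_le (hh : IsDoublingWith A τ h)
    (amono : Antitone a) (asum : Summable a) (hδ : δ ≤ A) (hq : q < 2 ^ K) :
    τ * packingSup h δ (cantorSetOf a) ≤
      2 ^ (K + 1) * packingSup h δ (cantorSetOf a ∩ stepInterval a K q) := by
  refine mul_packingSup_le fun T hT => ?_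
  obtain ⟨ρ, hρ, hρT⟩ := hT.exists_pos_le_radius
  obtain ⟨k, hk⟩ := exists_level_nodeLen_lt amono asum (half_pos hρ)
  have hcover : ∀ p ∈ T, ∃ n < 2 ^ (K + 1 + k), p.1 ∈ stepInterval a (K + 1 + k) n :=
    fun p hp => mem_cantorSetOf_iff.1 (hT.center_mem p hp) _
  choose! n hn hpn using hcover
  have hmaps : ∀ p ∈ T, n p / 2 ^ k ∈ Finset.range (2 ^ (K + 1)) := fun p hp => by
    rw [Finset.mem_range, Nat.div_lt_iff_lt_mul (Nat.two_pow_pos k), ← pow_add]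
    exact hn p hp
  have hpiece : ∀ q' ∈ Finset.range (2 ^ (K + 1)),
      τ * ∑ p ∈ T with n p / 2 ^ k = q', h (2 * p.2) ≤
        packingSup h δ (cantorSetOf a ∩ stepInterval a K q) := by
    intro q' hq'
    have hindex : ∀ p ∈ T.filter (n · / 2 ^ k = q'), q' * 2 ^ k + n p % 2 ^ k = n p :=
      fun p hp => (Finset.mem_filter.1 hp).2 ▸ Nat.div_add_mod' _ _
    refine hh.mul_sum_le_packingSup_of_subtree (n := fun p => n p % 2 ^ k) amono asum hδ
      (hT.subset (T.filter_subset _)) ?_ hq (Finset.mem_range.1 hq')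
      (fun _ _ => Nat.mod_lt _ (Nat.two_pow_pos k)) (fun p hp => ?_) fun p hp => ?_
    -- Any node of level `K + 1` comes after the node `(K, q)` in heap order.
    · rw [pow_succ]
      omega
    · rw [hindex p hp]
      exact hpn p (Finset.filter_subset _ _ hp)
    · linarith [hk (K + 1 + k) le_add_self (q' * 2 ^ k + n p % 2 ^ k),
        hρT p (Finset.filter_subset _ _ hp)]
  calc τ * ∑ p ∈ T, h (2 * p.2)
      = ∑ q' ∈ Finset.range (2 ^ (K + 1)), τ * ∑ p ∈ T with n p / 2 ^ k = q', h (2 * p.2) := by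
        rw [← Finset.sum_fiberwise_of_maps_to hmaps, Finset.mul_sum]
    _ ≤ 2 ^ (K + 1) * packingSup h δ (cantorSetOf a ∩ stepInterval a K q) := by
        simpa only [Finset.card_range, nsmul_eq_mul, Nat.cast_pow, Nat.cast_ofNat] using
          Finset.sum_le_card_nsmul _ _ _ hpiece

theorem exists_cantorSetOf_inter_stepInterval_subset_closure {ι : Type*} [Countable ι]
    (amono : Antitone a) (asum : Summable a) {t : ι → Set ℝ} (ht : cantorSetOf a ⊆ ⋃ i, t i) :
    ∃ i k q, q < 2 ^ k ∧ cantorSetOf a ∩ stepInterval a k q ⊆ closure (t i) := by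
  have hne : (cantorSetOf a).Nonempty :=
    ⟨leftEnd a 0 0, leftEnd_mem_cantorSetOf amono asum (Nat.two_pow_pos 0)⟩
  obtain ⟨i, x, hx, ρ, hρ, hball⟩ :=
    exists_inter_ball_subset_closure (isCompact_cantorSetOf a).isComplete hne ht
  obtain ⟨k, hk⟩ := exists_level_nodeLen_lt amono asum hρ
  obtain ⟨q, hq, hxq⟩ := mem_cantorSetOf_iff.1 hx k
  exact ⟨i, k, q, hq, fun y hy =>
    hball ⟨hy.1, (dist_le_nodeLen hy.2 hxq).trans_lt (hk k le_rfl q)⟩⟩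

theorem IsDoublingWith.P0h_cantorSetOf_inter_stepInterval_eq_top (hh : IsDoublingWith A τ h)
    (hτ : τ ≠ 0) (amono : Antitone a) (asum : Summable a) (hq : q < 2 ^ K)
    (htop : P0h A h (cantorSetOf a) = ∞) :
    P0h A h (cantorSetOf a ∩ stepInterval a K q) = ∞ := by
  rw [P0h_eq_iInf, iInf_eq_top] at htop ⊢
  intro δ
  have hle := hh.mul_packingSup_cantorSetOf_le amono asum δ.2.2 hq
  rw [htop δ, ENNReal.mul_top hτ, top_le_iff, ENNReal.mul_eq_top] at hle
  simpa using hle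

theorem IsDoublingWith.Ph_cantorSetOf_eq_top (hh : IsDoublingWith A τ h) (hτ : τ ≠ 0)
    (amono : Antitone a) (asum : Summable a) (htop : P0h A h (cantorSetOf a) = ∞) :
    Ph A h (cantorSetOf a) = ∞ := by
  refine iInf₂_eq_top.2 fun t ht => ?_
  obtain ⟨i, k, q, hq, hsub⟩ :=
    exists_cantorSetOf_inter_stepInterval_subset_closure amono asum ht.subset
  have hclosure : P0h A h (closure (t i)) = ∞ := top_le_iff.1 <|
    (hh.P0h_cantorSetOf_inter_stepInterval_eq_top hτ amono asum hq htop).ge.trans (P0h_mono hsub)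
  have hti : τ * P0h A h (closure (t i)) ≤ P0h A h (t i) := hh.mul_P0h_closure_le
  rw [hclosure, ENNReal.mul_top hτ, top_le_iff] at hti
  exact ENNReal.tsum_eq_top_of_eq_top ⟨i, hti⟩

end CantorPieces

end CantorTree

theorem packing_eq_prepacking_cantor_general {A : ℝ} {a : ℕ → ℝ} {h : ℝ → ℝ≥0∞} {τ : ℝ≥0∞}
    (hA : 0 < A) (amono : Antitone a) (asum : Summable a) (hh : IsDoublingWith A τ h) :
    τ * P0h A h (cantorSetOf a) ≤ Ph A h (cantorSetOf a) := by
  by_cases hfin : P0h A h (cantorSetOf a) = ∞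
  · rcases eq_or_ne τ 0 with rfl | hτ
    · simp only [zero_mul, zero_le]
    · exact le_top.trans (hh.Ph_cantorSetOf_eq_top hτ amono asum hfin).ge
  · exact hh.mul_P0h_le_Ph hA (isCompact_cantorSetOf a) hfin

/-- Theorem: for the Cantor set `C_a` of a summable
non-increasing positive sequence `a` and any dimension function `h`:
if `P₀^h(C_a) = ∞` then `P^h(C_a) = ∞`, and if `P₀^h(C_a) > 0` then
`P^h(C_a) > 0`. -/
theorem packing_eq_prepacking_cantor (A : ℝ) (a : ℕ → ℝ)
    (apos : ∀ n, 0 < a n) (amono : ∀ n, a (n + 1) ≤ a n) (asum : Summable a)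
    (h : ℝ → ℝ≥0∞) (hd : IsDimFun A h) :
    (P0h A h (cantorSetOf a) = ∞ → Ph A h (cantorSetOf a) = ∞) ∧
    (0 < P0h A h (cantorSetOf a) → 0 < Ph A h (cantorSetOf a)) := by
  obtain ⟨τ, hτ, -, hh⟩ := hd.doubling
  have hle : τ * P0h A h (cantorSetOf a) ≤ Ph A h (cantorSetOf a) :=
    packing_eq_prepacking_cantor_general hd.posA (antitone_nat_of_succ_le amono) asum hh
  refine ⟨fun htop => ?_, fun hpos => (ENNReal.mul_pos hτ.ne' hpos.ne').trans_le hle⟩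
  rwa [htop, ENNReal.mul_top hτ.ne', top_le_iff] at hle
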